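/- arXiv:1810.06864 — 2 statements merged into one kernel-verified Lean document; each statement's English description precedes it below -/
import Mathlib

section
/- For every finite graph G and every positive integer k, there exists a rooted compact tree decomposition (T,β) of G such that every adhesion of (T,β) has at most k vertices and every bag β(t) is (k,k)-edge-unbreakable in G. -/
/-- An edge cut of a graph: a pair of disjoint vertex sets covering `V(G)`. -/
def IsEdgeCut {V : Type} (A B : Set V) : Prop :=
  Disjoint A B ∧ A ∪ B = Set.univ

/-- The order of an edge cut `(A,B)`: the number of edges of `G` with one endpoint
in `A` and the other in `B`. -/
noncomputable def edgeCutOrder {V : Type} (G : SimpleGraph V) (A B : Set V) : ℕ :=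
  {e : Sym2 V | ∃ u v : V, e = s(u, v) ∧ G.Adj u v ∧ u ∈ A ∧ v ∈ B}.ncard

/-- `S` is `(q,k)`-edge-unbreakable in `G`: every edge cut of order at most `k`
has at most `q` vertices of `S` on one of its sides. -/
def IsEdgeUnbreakable {V : Type} (G : SimpleGraph V) (S : Set V) (q k : ℕ) : Prop :=
  ∀ A B : Set V, IsEdgeCut A B → edgeCutOrder G A B ≤ k →
    (A ∩ S).ncard ≤ q ∨ (B ∩ S).ncard ≤ q

/-- `s` is an ancestor of `t` (possibly `s = t`) with respect to the parent map. -/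
def IsAncestor {ι : Type} (parent : ι → ι) (s t : ι) : Prop :=
  ∃ n : ℕ, parent^[n] t = s

/-- `s` lies on the (unique) path between `t₁` and `t₂` in the rooted tree given by
`parent`. -/
def OnTreePath {ι : Type} (parent : ι → ι) (s t₁ t₂ : ι) : Prop :=
  (IsAncestor parent s t₁ ∨ IsAncestor parent s t₂) ∧
    ∀ u : ι, IsAncestor parent u t₁ → IsAncestor parent u t₂ → IsAncestor parent u s

/-- A rooted tree decomposition of `G`. -/
structure IsRootedTreeDecomp {V ι : Type} (G : SimpleGraph V) (root : ι)
    (parent : ι → ι) (β : ι → Set V) : Prop where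
  parent_root : parent root = root
  reaches_root : ∀ t : ι, ∃ n : ℕ, parent^[n] t = root
  exists_bag : ∀ v : V, ∃ t : ι, v ∈ β t
  adj_bag : ∀ u v : V, G.Adj u v → ∃ t : ι, u ∈ β t ∧ v ∈ β t
  bag_connected : ∀ (v : V) (t₁ t₂ s : ι), v ∈ β t₁ → v ∈ β t₂ →
    OnTreePath parent s t₁ t₂ → v ∈ β s

/-- The (open) neighborhood of a vertex set `X` in `G`. -/
def nbhd {V : Type} (G : SimpleGraph V) (X : Set V) : Set V :=
  {v | v ∉ X ∧ ∃ u ∈ X, G.Adj u v}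

/-- `γ(t)`: union of the bags of `t` and all its descendants. -/
def gammaSet {V ι : Type} (parent : ι → ι) (β : ι → Set V) (t : ι) : Set V :=
  {v | ∃ s : ι, IsAncestor parent t s ∧ v ∈ β s}

/-- `α(t) = γ(t) \ σ(t)`. -/
def alphaSet {V ι : Type} (parent : ι → ι) (β : ι → Set V) (t : ι) : Set V :=
  gammaSet parent β t \ (β t ∩ β (parent t))

/-- Compactness of a rooted tree decomposition: for every non-root node `t`,
`G[α(t)]` is connected and `N_G(α(t)) = σ(t)`. -/
def IsCompactRTD {V ι : Type} (G : SimpleGraph V) (root : ι) (parent : ι → ι)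
    (β : ι → Set V) : Prop :=
  ∀ t : ι, t ≠ root → (G.induce (alphaSet parent β t)).Connected ∧
    nbhd G (alphaSet parent β t) = β t ∩ β (parent t)

/-!
A rooted tree decomposition is encoded by the laminar family of its sets `α(t)`, the adhesions
being the neighborhoods of these sets. Among the laminar families whose members have at most `k`
neighbors, take one minimizing a potential that charges exponentially for the bags with more than
`k` vertices. Its root bag `W` is `(k,k)`-unbreakable already with respect to vertex separations:
otherwise cut every member of the family along a separation of minimum order breaking `W`. By
uncrossing, the minimality of the order keeps the neighborhoods of the two halves of each member
of size at most `k` and prevents their bags from increasing the potential, while the bag `W` is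
replaced by two strictly smaller ones. Moving the root to another node does not increase the
potential, so every bag is unbreakable. Replacing each member by its connected components then
makes the decomposition compact. Finally, an edge cut `(A,B)` of order at most `k` gives the
vertex separation with separator `N(B)`, of order at most `k`.
-/

section Neighborhoods

variable {V : Type} {G : SimpleGraph V} {X X' Y Y' : Set V} {v : V}

/-- The closed neighborhood `N_G[X]`. -/
def closedNbhd (G : SimpleGraph V) (X : Set V) : Set V := X ∪ nbhd G X

/-- `X` and `Y` are disjoint and no edge of `G` joins them. -/
def Anticomplete (G : SimpleGraph V) (X Y : Set V) : Prop :=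
  ∀ x ∈ X, ∀ y ∈ Y, x ≠ y ∧ ¬ G.Adj x y

/-- The laminarity relation: `X` and `Y` are comparable or anticomplete. -/
def Nested (G : SimpleGraph V) (X Y : Set V) : Prop :=
  X ⊆ Y ∨ Y ⊆ X ∨ Anticomplete G X Y

lemma mem_closedNbhd : v ∈ closedNbhd G X ↔ v ∈ X ∨ ∃ u ∈ X, G.Adj u v := by
  simp only [closedNbhd, nbhd, Set.mem_union, Set.mem_ofPred_eq]
  tauto

lemma subset_closedNbhd : X ⊆ closedNbhd G X := Set.subset_union_left

lemma nbhd_subset_closedNbhd : nbhd G X ⊆ closedNbhd G X := Set.subset_union_right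

lemma closedNbhd_mono (h : X ⊆ Y) : closedNbhd G X ⊆ closedNbhd G Y := fun _ hv =>
  mem_closedNbhd.2 <| (mem_closedNbhd.1 hv).imp (@h _) fun ⟨u, hu, huv⟩ => ⟨u, h hu, huv⟩

lemma nbhd_univ : nbhd G Set.univ = ∅ := by simp [nbhd]

lemma nbhd_empty : nbhd G ∅ = ∅ := by simp [nbhd]

lemma closedNbhd_empty : closedNbhd G ∅ = ∅ := by simp [closedNbhd, nbhd_empty]

lemma closedNbhd_diff_nbhd : closedNbhd G X \ nbhd G X = X :=
  Set.union_sdiff_cancel_right fun _ hv => hv.2.1 hv.1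

lemma nbhd_compl_closedNbhd_subset : nbhd G (closedNbhd G X)ᶜ ⊆ nbhd G X := by
  rintro v ⟨hv, u, hu, huv⟩
  refine (not_not.1 hv).resolve_left fun hvX => hu ?_
  exact mem_closedNbhd.2 (.inr ⟨v, hvX, huv.symm⟩)

lemma Anticomplete.symm (h : Anticomplete G X Y) : Anticomplete G Y X :=
  fun y hy x hx => ⟨(h x hx y hy).1.symm, fun hyx => (h x hx y hy).2 hyx.symm⟩

lemma Anticomplete.mono (h : Anticomplete G X Y) (hX : X' ⊆ X) (hY : Y' ⊆ Y) :
    Anticomplete G X' Y' :=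
  fun x hx y hy => h x (hX hx) y (hY hy)

lemma Anticomplete.disjoint (h : Anticomplete G X Y) : Disjoint X Y :=
  Set.disjoint_left.2 fun x hX hY => (h x hX x hY).1 rfl

lemma anticomplete_iff_subset_compl_closedNbhd :
    Anticomplete G X Y ↔ Y ⊆ (closedNbhd G X)ᶜ := by
  refine ⟨fun h y hy hyX => ?_, fun h x hx y hy => ⟨?_, fun hxy => ?_⟩⟩
  · rcases mem_closedNbhd.1 hyX with hyX | ⟨x, hx, hxy⟩
    · exact (h y hyX y hy).1 rfl
    · exact (h x hx y hy).2 hxy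
  · rintro rfl
    exact h hy (subset_closedNbhd hx)
  · exact h hy (mem_closedNbhd.2 (.inr ⟨x, hx, hxy⟩))

lemma anticomplete_compl_closedNbhd : Anticomplete G X (closedNbhd G X)ᶜ :=
  anticomplete_iff_subset_compl_closedNbhd.2 subset_rfl

lemma Nested.symm (h : Nested G X Y) : Nested G Y X := by
  rcases h with h | h | h
  exacts [.inr (.inl h), .inl h, .inr (.inr h.symm)]

lemma Nested.inter_right (h : Nested G X Y) (R : Set V) : Nested G (X ∩ R) (Y ∩ R) := by
  rcases h with h | h | h
  · exact .inl (Set.inter_subset_inter_left R h)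
  · exact .inr (.inl (Set.inter_subset_inter_left R h))
  · exact .inr (.inr (h.mono Set.inter_subset_left Set.inter_subset_left))

lemma nested_univ_right : Nested G X Set.univ := .inl (Set.subset_univ X)

end Neighborhoods

section Chains

variable {α : Type*} {S : Set (Set α)}

lemma sInter_mem_of_isChain (hS : IsChain (· ⊆ ·) S) (hfin : S.Finite) (hne : S.Nonempty) :
    ⋂₀ S ∈ S := by
  obtain ⟨X, hX⟩ := hfin.exists_minimal hne
  have hdir : DirectedOn (fun Y Z => Z ≤ Y) S := fun Y hY Z hZ => (hS.total hY hZ).elim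
    (fun h => ⟨Y, hY, subset_rfl, h⟩) fun h => ⟨Z, hZ, h, subset_rfl⟩
  have hleast : IsLeast S X := hdir.minimal_iff_isLeast.1 hX
  rw [← Set.sInf_eq_sInter, hleast.isGLB.sInf_eq]
  exact hleast.1

lemma sUnion_mem_of_isChain (hS : IsChain (· ⊆ ·) S) (hfin : S.Finite) (hne : S.Nonempty) :
    ⋃₀ S ∈ S := by
  obtain ⟨X, hX⟩ := hfin.exists_maximal hne
  have hgreatest : IsGreatest S X := hS.directedOn.maximal_iff_isGreatest.1 hX
  rw [← Set.sSup_eq_sUnion, hgreatest.isLUB.sSup_eq]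
  exact hgreatest.1

end Chains

/-- A laminar family of vertex sets containing `V(G)`: the sets `α(t)` of the nodes `t` of a
rooted tree decomposition, the root corresponding to `V(G)`. -/
structure IsLaminar {V : Type} (G : SimpleGraph V) (L : Set (Set V)) : Prop where
  univ_mem : Set.univ ∈ L
  nested : ∀ X ∈ L, ∀ Y ∈ L, Nested G X Y

/-- The bag of the node of a laminar family `L` whose set is `X`. -/
def bag {V : Type} (G : SimpleGraph V) (L : Set (Set V)) (X : Set V) : Set V :=
  closedNbhd G X \ ⋃₀ {Y ∈ L | Y ⊂ X}

/-- The parent of `X` in a laminar family `L`, as the intersection of the strict supersets of `X`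
in `L`; in particular the parent of `Set.univ` is `Set.univ`. -/
def parentSet {V : Type} (L : Set (Set V)) (X : Set V) : Set V := ⋂₀ {Y ∈ L | X ⊂ Y}

/-- The child of `Y` towards `C` in a laminar family `L`, for `C ⊂ Y`, as the union of the members
of `L` strictly below `Y` that contain `C`; it is empty for `Y = C`. -/
def childTowards {V : Type} (L : Set (Set V)) (C Y : Set V) : Set V :=
  ⋃₀ {D ∈ L | C ⊆ D ∧ D ⊂ Y}

section LaminarFamilies

variable {V : Type} {G : SimpleGraph V} {L : Set (Set V)} {C X Y : Set V} {v : V}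

lemma mem_bag : v ∈ bag G L X ↔ v ∈ closedNbhd G X ∧ ∀ Y ∈ L, Y ⊂ X → v ∉ Y := by
  simp only [bag, Set.mem_sdiff, Set.mem_sUnion, Set.mem_ofPred_eq, not_exists, not_and, and_imp]

lemma nbhd_subset_bag : nbhd G X ⊆ bag G L X := fun _ hv =>
  mem_bag.2 ⟨nbhd_subset_closedNbhd hv, fun _ _ hYX hvY => hv.1 (hYX.1 hvY)⟩

lemma disjoint_bag_univ (hX : X ∈ L) (hne : X ≠ Set.univ) : Disjoint (bag G L Set.univ) X :=
  Set.disjoint_left.2 fun _ hv => (mem_bag.1 hv).2 X hX (Set.ssubset_univ_iff.2 hne)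

lemma subset_parentSet : X ⊆ parentSet L X := Set.subset_sInter fun _ hY => hY.2.1

lemma parentSet_subset (hY : Y ∈ L) (hXY : X ⊂ Y) : parentSet L X ⊆ Y :=
  Set.sInter_subset_of_mem ⟨hY, hXY⟩

lemma parentSet_univ : parentSet L Set.univ = Set.univ :=
  Set.univ_subset_iff.1 subset_parentSet

lemma childTowards_mono (h : X ⊆ Y) : childTowards L C X ⊆ childTowards L C Y :=
  Set.sUnion_subset_sUnion fun _ hD => ⟨hD.1, hD.2.1, hD.2.2.trans_subset h⟩

lemma childTowards_self : childTowards L C C = ∅ :=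
  Set.sUnion_eq_empty.2 fun _ hD => absurd hD.2.1 hD.2.2.2

lemma subset_childTowards (hX : X ∈ L) (hCX : C ⊆ X) (hXY : X ⊂ Y) : X ⊆ childTowards L C Y :=
  Set.subset_sUnion_of_mem ⟨hX, hCX, hXY⟩

namespace IsLaminar

lemma isChain_superset (hL : IsLaminar G L) (hC : C.Nonempty) :
    IsChain (· ⊆ ·) {Y ∈ L | C ⊆ Y} := by
  rintro X ⟨hX, hCX⟩ Y ⟨hY, hCY⟩ -
  rcases hL.nested X hX Y hY with h | h | h
  · exact .inl h
  · exact .inr h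
  · exact absurd (hC.mono (Set.subset_inter hCX hCY)) (Set.not_nonempty_iff_eq_empty.2
      h.disjoint.inter_eq)

lemma mem_bag_iff (hL : IsLaminar G L) (hX : X ∈ L) :
    v ∈ bag G L X ↔ v ∈ closedNbhd G X ∧ ∀ Y ∈ L, v ∈ Y → X ⊆ Y := by
  refine mem_bag.trans (and_congr_right fun hv => ⟨fun h Y hY hvY => ?_, fun h Y hY hYX hvY => ?_⟩)
  · rcases hL.nested X hX Y hY with hXY | hYX | hXY
    · exact hXY
    · by_contra hne
      exact h Y hY ⟨hYX, hne⟩ hvY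
    · exact absurd hv (anticomplete_iff_subset_compl_closedNbhd.1 hXY hvY)
  · exact hYX.2 (h Y hY hvY)

lemma subset_childTowards_or_anticomplete (hL : IsLaminar G L) (hX : X ∈ L) (hCX : ¬ C ⊆ X) :
    X ⊆ childTowards L C Y ∨ Anticomplete G X (childTowards L C Y) := by
  by_cases h : ∃ D ∈ L, C ⊆ D ∧ D ⊂ Y ∧ X ⊆ D
  · obtain ⟨D, hD, hCD, hDY, hXD⟩ := h
    exact .inl (hXD.trans (subset_childTowards hD hCD hDY))
  · refine .inr fun x hx y ⟨D, ⟨hD, hCD, hDY⟩, hyD⟩ => ?_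
    rcases hL.nested X hX D hD with hXD | hDX | hXD
    · exact absurd ⟨D, hD, hCD, hDY, hXD⟩ h
    · exact absurd (hCD.trans hDX) hCX
    · exact hXD x hx y hyD

variable [Finite V]

lemma exists_least_mem (hL : IsLaminar G L) (v : V) :
    ∃ X : L, v ∈ X.1 ∧ ∀ Y ∈ L, v ∈ Y → X.1 ⊆ Y := by
  have hchain : IsChain (· ⊆ ·) {Y ∈ L | v ∈ Y} := by
    simpa only [Set.singleton_subset_iff] using hL.isChain_superset (Set.singleton_nonempty v)
  have hmem := sInter_mem_of_isChain hchain (Set.toFinite _)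
    ⟨Set.univ, hL.univ_mem, Set.mem_univ v⟩
  exact ⟨⟨_, hmem.1⟩, hmem.2, fun Y hY hvY => Set.sInter_subset_of_mem ⟨hY, hvY⟩⟩

lemma parentSet_mem (hL : IsLaminar G L) (hX : X.Nonempty) (hne : X ≠ Set.univ) :
    parentSet L X ∈ {Y ∈ L | X ⊂ Y} :=
  sInter_mem_of_isChain ((hL.isChain_superset hX).mono fun _ hY => And.intro hY.1 hY.2.1)
    (Set.toFinite _) ⟨Set.univ, hL.univ_mem, Set.ssubset_univ_iff.2 hne⟩

lemma bag_inter_bag_parentSet (hL : IsLaminar G L) (hX : X ∈ L) (hX₀ : X.Nonempty)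
    (hne : X ≠ Set.univ) : bag G L X ∩ bag G L (parentSet L X) = nbhd G X := by
  obtain ⟨hP, hXP⟩ := hL.parentSet_mem hX₀ hne
  refine subset_antisymm ?_ (Set.subset_inter nbhd_subset_bag fun v hv => ?_)
  · rintro v ⟨hvX, hvP⟩
    exact (mem_bag.1 hvX).1.resolve_left ((mem_bag.1 hvP).2 X hX hXP)
  · refine (hL.mem_bag_iff hP).2
      ⟨closedNbhd_mono subset_parentSet (nbhd_subset_closedNbhd hv), fun Y hY hvY => ?_⟩
    have hXY : X ⊆ Y := ((hL.mem_bag_iff hX).1 (nbhd_subset_bag hv)).2 Y hY hvY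
    exact parentSet_subset hY ⟨hXY, fun hYX => hv.1 (hYX hvY)⟩

lemma childTowards_eq_empty_or_mem (hL : IsLaminar G L) (hC : C.Nonempty) (Y : Set V) :
    childTowards L C Y = ∅ ∨ childTowards L C Y ∈ L := by
  rcases Set.eq_empty_or_nonempty {D ∈ L | C ⊆ D ∧ D ⊂ Y} with h | h
  · exact .inl (by rw [childTowards, h, Set.sUnion_empty])
  · have hchain : IsChain (· ⊆ ·) {D ∈ L | C ⊆ D ∧ D ⊂ Y} :=
      (hL.isChain_superset hC).mono fun _ hD => And.intro hD.1 hD.2.1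
    exact .inr (sUnion_mem_of_isChain hchain (Set.toFinite _) h).1

lemma childTowards_parentSet (hL : IsLaminar G L) (hC : C.Nonempty) (hX : X ∈ L) (hCX : C ⊆ X)
    (hne : X ≠ Set.univ) : childTowards L C (parentSet L X) = X := by
  have hXP := (hL.parentSet_mem (hC.mono hCX) hne).2
  refine subset_antisymm (Set.sUnion_subset fun D ⟨hD, hCD, hDP⟩ => ?_)
    (subset_childTowards hX hCX hXP)
  by_contra hDX
  have hXD : X ⊆ D := ((hL.isChain_superset hC).total ⟨hX, hCX⟩ ⟨hD, hCD⟩).resolve_right hDX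
  exact hDP.2 (parentSet_subset hD ⟨hXD, hDX⟩)

end IsLaminar

end LaminarFamilies

section TreeOfLaminarFamily

variable {V : Type} [Finite V] {G : SimpleGraph V} {L : Set (Set V)}

/-- The parent map on the nodes of the tree of a laminar family: its nodes are the members of the
family, ordered by reverse inclusion. -/
noncomputable def parentNode (hL : IsLaminar G L) (hne : ∀ X ∈ L, X ≠ Set.univ → X.Nonempty)
    (t : L) : L :=
  ⟨parentSet L t, by
    by_cases ht : t.1 = Set.univ
    · rw [ht, parentSet_univ]
      exact hL.univ_mem
    · exact (hL.parentSet_mem (hne t t.2 ht) ht).1⟩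

variable (hL : IsLaminar G L) (hne : ∀ X ∈ L, X ≠ Set.univ → X.Nonempty)

lemma isAncestor_parentNode_iff {s t : L} :
    IsAncestor (parentNode hL hne) s t ↔ t.1 ⊆ s.1 := by
  constructor
  · rintro ⟨n, rfl⟩
    induction n with
    | zero => exact subset_rfl
    | succ n ih =>
      rw [Function.iterate_succ_apply']
      exact ih.trans subset_parentSet
  · intro hts
    induction t using WellFoundedGT.induction with
    | ind t ih =>
      rcases eq_or_ne t s with rfl | hne_ts
      · exact ⟨0, rfl⟩
      have hlt : t.1 ⊂ s.1 := hts.ssubset_of_ne (Subtype.coe_ne_coe.2 hne_ts)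
      have ht : t.1 ≠ Set.univ := (hlt.trans_subset (Set.subset_univ _)).ne
      obtain ⟨n, hn⟩ := ih (parentNode hL hne t) (hL.parentSet_mem (hne t t.2 ht) ht).2
        (parentSet_subset s.2 hlt)
      exact ⟨n + 1, hn⟩

lemma isRootedTreeDecomp_of_isLaminar :
    IsRootedTreeDecomp G ⟨Set.univ, hL.univ_mem⟩ (parentNode hL hne) fun t => bag G L t where
  parent_root := Subtype.ext parentSet_univ
  reaches_root t := (isAncestor_parentNode_iff hL hne).2 (Set.subset_univ _)
  exists_bag v := (hL.exists_least_mem v).imp fun X ⟨hvX, h⟩ =>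
    (hL.mem_bag_iff X.2).2 ⟨subset_closedNbhd hvX, h⟩
  adj_bag u v huv := by
    obtain ⟨X, hvX, hX⟩ := hL.exists_least_mem v
    obtain ⟨Y, huY, hY⟩ := hL.exists_least_mem u
    rcases hL.nested X X.2 Y Y.2 with h | h | h
    · exact ⟨X, (hL.mem_bag_iff X.2).2 ⟨mem_closedNbhd.2 (.inr ⟨v, hvX, huv.symm⟩),
        fun Z hZ huZ => h.trans (hY Z hZ huZ)⟩, (hL.mem_bag_iff X.2).2 ⟨subset_closedNbhd hvX, hX⟩⟩
    · exact ⟨Y, (hL.mem_bag_iff Y.2).2 ⟨subset_closedNbhd huY, hY⟩, (hL.mem_bag_iff Y.2).2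
        ⟨mem_closedNbhd.2 (.inr ⟨u, huY, huv⟩), fun Z hZ hvZ => h.trans (hX Z hZ hvZ)⟩⟩
    · exact absurd huv.symm (h v hvX u huY).2
  bag_connected v t₁ t₂ s h₁ h₂ := by
    rintro ⟨hanc, hmeet⟩
    rw [hL.mem_bag_iff (Subtype.prop _)] at h₁ h₂ ⊢
    simp only [isAncestor_parentNode_iff] at hanc hmeet
    refine ⟨?_, fun Y hY hvY => hmeet ⟨Y, hY⟩ (h₁.2 Y hY hvY) (h₂.2 Y hY hvY)⟩
    exact hanc.elim (closedNbhd_mono · h₁.1) (closedNbhd_mono · h₂.1)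

lemma gammaSet_bag (t : L) :
    gammaSet (parentNode hL hne) (fun s => bag G L s) t = closedNbhd G t := by
  refine subset_antisymm ?_ fun v hv => ?_
  · rintro v ⟨s, hst, hv⟩
    exact closedNbhd_mono ((isAncestor_parentNode_iff hL hne).1 hst) (mem_bag.1 hv).1
  · rcases hv with hv | hv
    · obtain ⟨X, hvX, hX⟩ := hL.exists_least_mem v
      exact ⟨X, (isAncestor_parentNode_iff hL hne).2 (hX t t.2 hv),
        (hL.mem_bag_iff X.2).2 ⟨subset_closedNbhd hvX, hX⟩⟩
    · exact ⟨t, (isAncestor_parentNode_iff hL hne).2 subset_rfl, nbhd_subset_bag hv⟩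

lemma bag_inter_bag_parentNode {t : L} (ht : t.1 ≠ Set.univ) :
    bag G L t ∩ bag G L (parentNode hL hne t) = nbhd G t :=
  hL.bag_inter_bag_parentSet t.2 (hne t t.2 ht) ht

lemma alphaSet_bag {t : L} (ht : t.1 ≠ Set.univ) :
    alphaSet (parentNode hL hne) (fun s => bag G L s) t = t := by
  rw [alphaSet, gammaSet_bag, bag_inter_bag_parentNode hL hne ht, closedNbhd_diff_nbhd]

lemma isCompactRTD_of_isLaminar (hconn : ∀ X ∈ L, X ≠ Set.univ → (G.induce X).Connected) :
    IsCompactRTD G ⟨Set.univ, hL.univ_mem⟩ (parentNode hL hne) fun t => bag G L t := by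
  intro t ht
  have ht' : t.1 ≠ Set.univ := fun h => ht (Subtype.ext h)
  rw [alphaSet_bag hL hne ht', bag_inter_bag_parentNode hL hne ht']
  exact ⟨hconn t t.2 ht', rfl⟩

end TreeOfLaminarFamily

section Components

variable {V : Type} {G : SimpleGraph V} {D D' K K' : Set V} {v : V}

/-- `K` is the vertex set of a connected component of `G[D]`. -/
def IsComponent (G : SimpleGraph V) (D K : Set V) : Prop :=
  Maximal (fun K => K ⊆ D ∧ (G.induce K).Connected) K

lemma subset_of_induce_connected (hK : (G.induce K).Connected) (hvK : v ∈ K) (hvK' : v ∈ K')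
    (hdisj : Disjoint (nbhd G K') K) : K ⊆ K' := by
  intro w hw
  by_contra hwK'
  obtain ⟨p⟩ := hK.preconnected ⟨v, hvK⟩ ⟨w, hw⟩
  obtain ⟨d, -, hd, hd'⟩ := p.exists_boundary_dart (Subtype.val ⁻¹' K') hvK' hwK'
  exact Set.disjoint_left.1 hdisj ⟨hd', d.fst, hd, d.adj⟩ d.snd.2

namespace IsComponent

lemma exists_mem [Finite V] (hv : v ∈ D) : ∃ K, IsComponent G D K ∧ v ∈ K := by
  have hconn : (G.induce {v}).Connected := ⟨.of_subsingleton⟩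
  obtain ⟨K, hvK, hK⟩ := Finite.exists_le_maximal
    (p := fun K => K ⊆ D ∧ (G.induce K).Connected) ⟨Set.singleton_subset_iff.2 hv, hconn⟩
  exact ⟨K, hK, hvK rfl⟩

lemma disjoint_nbhd (hK : IsComponent G D K) : Disjoint (nbhd G K) D := by
  refine Set.disjoint_left.2 fun v ⟨hvK, u, hu, huv⟩ hvD => hvK ?_
  have hconn : (G.induce (K ∪ {u, v})).Connected := SimpleGraph.induce_union_connected
    hK.prop.2.preconnected (SimpleGraph.induce_pair_connected_of_adj huv).preconnected
    ⟨u, hu, .inl rfl⟩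
  have hsub : K ∪ {u, v} ⊆ D := Set.union_subset hK.prop.1 (Set.pair_subset (hK.prop.1 hu) hvD)
  exact hK.le_of_ge ⟨hsub, hconn⟩ Set.subset_union_left (.inr (.inr rfl))

lemma nbhd_subset (hK : IsComponent G D K) : nbhd G K ⊆ nbhd G D := fun _ hv =>
  ⟨Set.disjoint_left.1 hK.disjoint_nbhd hv, hv.2.imp fun _ hu => ⟨hK.prop.1 hu.1, hu.2⟩⟩

lemma subset_or_anticomplete (hK : IsComponent G D K) (hK' : IsComponent G D' K') (h : D ⊆ D') :
    K ⊆ K' ∨ Anticomplete G K K' := by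
  have hdisj : Disjoint (nbhd G K') K := hK'.disjoint_nbhd.mono_right (hK.prop.1.trans h)
  refine or_iff_not_imp_left.2 fun hKK' x hx y hy => ⟨?_, fun hxy => ?_⟩
  · rintro rfl
    exact hKK' (subset_of_induce_connected hK.prop.2 hx hy hdisj)
  · have hx' : x ∉ K' := fun hx' => hKK' (subset_of_induce_connected hK.prop.2 hx hx' hdisj)
    exact Set.disjoint_left.1 hdisj ⟨hx', y, hy, hxy.symm⟩ hx

lemma nested (hK : IsComponent G D K) (hK' : IsComponent G D' K') (h : Nested G D D') :
    Nested G K K' := by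
  rcases h with h | h | h
  · exact (hK.subset_or_anticomplete hK' h).imp_right .inr
  · exact Nested.symm ((hK'.subset_or_anticomplete hK h).imp_right .inr)
  · exact .inr (.inr (h.mono hK.prop.1 hK'.prop.1))

end IsComponent

/-- The family consisting of `V(G)` and the connected components of the members of `L`. -/
def componentFamily (G : SimpleGraph V) (L : Set (Set V)) : Set (Set V) :=
  insert Set.univ {K | ∃ D ∈ L, IsComponent G D K}

variable {L : Set (Set V)} {X : Set V}

lemma induce_connected_of_mem_componentFamily (hX : X ∈ componentFamily G L)
    (hne : X ≠ Set.univ) : (G.induce X).Connected :=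
  let ⟨_, _, hXD⟩ := hX.resolve_left hne
  hXD.prop.2

lemma isLaminar_componentFamily (hL : IsLaminar G L) : IsLaminar G (componentFamily G L) where
  univ_mem := .inl rfl
  nested := by
    rintro X (rfl | ⟨D, hD, hX⟩) Y (rfl | ⟨D', hD', hY⟩)
    · exact nested_univ_right
    · exact nested_univ_right.symm
    · exact nested_univ_right
    · exact hX.nested hY (hL.nested D hD D' hD')

lemma bag_componentFamily_univ_subset [Finite V] :
    bag G (componentFamily G L) Set.univ ⊆ bag G L Set.univ := fun v hv => by
  refine mem_bag.2 ⟨(mem_bag.1 hv).1, fun Y hY hYu hvY => ?_⟩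
  obtain ⟨K, hK, hvK⟩ := IsComponent.exists_mem (G := G) hvY
  exact (mem_bag.1 hv).2 K (.inr ⟨Y, hY, hK⟩) (hK.prop.1.trans_ssubset hYu) hvK

lemma bag_componentFamily_subset_of_minimal [Finite V]
    (hD : Minimal (fun D => D ∈ L ∧ IsComponent G D X) D) :
    bag G (componentFamily G L) X ⊆ bag G L D := by
  have hXD : IsComponent G D X := hD.prop.2
  intro v hv
  rw [mem_bag] at hv
  rcases hv.1 with hvX | hvX
  · refine mem_bag.2 ⟨subset_closedNbhd (hXD.prop.1 hvX), fun Y hY hYD hvY => ?_⟩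
    obtain ⟨K, hK, hvK⟩ := IsComponent.exists_mem (G := G) hvY
    have hKX : K ⊆ X := subset_of_induce_connected hK.prop.2 hvK hvX
      (hXD.disjoint_nbhd.mono_right (hK.prop.1.trans hYD.1))
    rcases hKX.eq_or_ssubset with rfl | hKX
    · exact hYD.2 (hD.le_of_le ⟨hY, hK⟩ hYD.1)
    · exact hv.2 K (.inr ⟨Y, hY, hK⟩) hKX hvK
  · exact nbhd_subset_bag (hXD.nbhd_subset hvX)

lemma exists_bag_componentFamily_subset [Finite V] (hL : IsLaminar G L)
    (hX : X ∈ componentFamily G L) : ∃ D ∈ L, bag G (componentFamily G L) X ⊆ bag G L D := by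
  rcases hX with rfl | ⟨D, hD, hX⟩
  · exact ⟨Set.univ, hL.univ_mem, bag_componentFamily_univ_subset⟩
  · obtain ⟨E, -, hE⟩ := Finite.exists_le_minimal (p := fun D => D ∈ L ∧ IsComponent G D X) ⟨hD, hX⟩
    exact ⟨E, hE.prop.1, bag_componentFamily_subset_of_minimal hE⟩

end Components

section Separations

variable {V : Type} {G : SimpleGraph V} {P Q D W W' : Set V} {q k : ℕ}

/-- The separator of a vertex separation with sides `P` and `Q`. Separations are encoded by their
two open sides, an anticomplete pair, instead of `(P ∪ separator P Q, Q ∪ separator P Q)`. -/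
def separator (P Q : Set V) : Set V := (P ∪ Q)ᶜ

/-- The separation with open sides `P` and `Q` has order at most `k` and witnesses that `W` is not
`(q,k)`-unbreakable. -/
structure Breaks (G : SimpleGraph V) (W : Set V) (q k : ℕ) (P Q : Set V) : Prop where
  anticomplete : Anticomplete G P Q
  ncard_separator_le : (separator P Q).ncard ≤ k
  lt_ncard_sdiff_left : q < (W \ P).ncard
  lt_ncard_sdiff_right : q < (W \ Q).ncard

/-- A separation breaking `W` whose order is minimum among those. -/
structure BreaksMinimally (G : SimpleGraph V) (W : Set V) (q k : ℕ) (P Q : Set V) : Prop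
    extends Breaks G W q k P Q where
  ncard_separator_le_of_breaks : ∀ P' Q', Breaks G W q k P' Q' →
    (separator P Q).ncard ≤ (separator P' Q').ncard

/-- `W` is `(q,k)`-unbreakable in `G`: every vertex separation of order at most `k` has at most
`q` vertices of `W` on one of its sides, separator included. -/
def IsUnbreakable (G : SimpleGraph V) (W : Set V) (q k : ℕ) : Prop :=
  ∀ P Q, ¬ Breaks G W q k P Q

lemma separator_comm (P Q : Set V) : separator P Q = separator Q P := by
  rw [separator, separator, Set.union_comm]

lemma ncard_eq_add_separator [Finite V] (hPQ : Disjoint P Q) (W : Set V) :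
    W.ncard = (W ∩ P).ncard + (W ∩ separator P Q).ncard + (W ∩ Q).ncard := by
  have hQ : (W \ P) ∩ Q = W ∩ Q := by
    rw [Set.sdiff_inter_right_comm, (hPQ.symm.mono_left Set.inter_subset_right).sdiff_eq_left]
  have hS : (W \ P) \ Q = W ∩ separator P Q := by
    rw [Set.sdiff_sdiff, separator, Set.sdiff_eq]
  rw [← Set.ncard_inter_add_ncard_sdiff_eq_ncard W P, ← hQ, ← hS,
    ← Set.ncard_inter_add_ncard_sdiff_eq_ncard (W \ P) Q]
  lia

lemma Breaks.symm (h : Breaks G W q k P Q) : Breaks G W q k Q P where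
  anticomplete := h.anticomplete.symm
  ncard_separator_le := by
    rw [separator_comm]
    exact h.ncard_separator_le
  lt_ncard_sdiff_left := h.lt_ncard_sdiff_right
  lt_ncard_sdiff_right := h.lt_ncard_sdiff_left

lemma Breaks.left_ne_univ (h : Breaks G W q k P Q) : P ≠ Set.univ := by
  rintro rfl
  simpa using h.lt_ncard_sdiff_left

lemma BreaksMinimally.symm (h : BreaksMinimally G W q k P Q) : BreaksMinimally G W q k Q P where
  toBreaks := h.toBreaks.symm
  ncard_separator_le_of_breaks := by
    rw [separator_comm]
    exact h.ncard_separator_le_of_breaks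

lemma exists_breaksMinimally (h : ¬ IsUnbreakable G W q k) :
    ∃ P Q, BreaksMinimally G W q k P Q := by
  simp only [IsUnbreakable, not_forall, not_not] at h
  obtain ⟨P, Q, hPQ⟩ := h
  obtain ⟨⟨P, Q⟩, hPQ, hmin⟩ := exists_minimalFor_of_wellFoundedLT
    (fun R : Set V × Set V => Breaks G W q k R.1 R.2) (fun R => (separator R.1 R.2).ncard)
    ⟨(P, Q), hPQ⟩
  exact ⟨P, Q, hPQ, fun P' Q' h' => not_lt.1 fun hlt =>
    (hmin (j := (P', Q')) h' hlt.le).not_gt hlt⟩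

lemma IsUnbreakable.mono [Finite V] (h : IsUnbreakable G W' q k) (hW : W ⊆ W') :
    IsUnbreakable G W q k := fun P Q hPQ => h P Q
  { hPQ with
    lt_ncard_sdiff_left := hPQ.lt_ncard_sdiff_left.trans_le
      (Set.ncard_le_ncard (Set.sdiff_subset_sdiff_left hW))
    lt_ncard_sdiff_right := hPQ.lt_ncard_sdiff_right.trans_le
      (Set.ncard_le_ncard (Set.sdiff_subset_sdiff_left hW)) }

lemma ncard_nbhd_le_edgeCutOrder [Finite V] {A B : Set V} (hAB : IsEdgeCut A B) :
    (nbhd G B).ncard ≤ edgeCutOrder G A B := by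
  have hA : ∀ a ∈ nbhd G B, a ∈ A := fun a ha =>
    (hAB.2.symm ▸ Set.mem_univ a : a ∈ A ∪ B).resolve_right ha.1
  choose! b hb using fun a (ha : a ∈ nbhd G B) => ha.2
  refine Set.ncard_le_ncard_of_injOn (fun a => s(a, b a))
    (fun a ha => ⟨a, b a, rfl, (hb a ha).2.symm, hA a ha, (hb a ha).1⟩) fun a ha a' ha' h => ?_
  rcases Sym2.eq_iff.1 h with h | h
  · exact h.1
  · exact absurd (h.1 ▸ (hb a' ha').1) ha.1

lemma IsUnbreakable.isEdgeUnbreakable [Finite V] (h : IsUnbreakable G W q k) :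
    IsEdgeUnbreakable G W q k := by
  intro A B hAB hk
  have hAc : A = Bᶜ := (IsCompl.of_eq hAB.1.inter_eq hAB.2).eq_compl
  have hsep : separator B (closedNbhd G B)ᶜ = nbhd G B := by
    rw [separator, Set.compl_union, compl_compl, Set.inter_comm, ← Set.sdiff_eq, closedNbhd,
      Set.union_sdiff_cancel_left fun _ hv => hv.2.1 hv.1]
  by_contra! hlt
  refine h B (closedNbhd G B)ᶜ ⟨anticomplete_compl_closedNbhd, ?_, ?_, ?_⟩
  · exact hsep ▸ (ncard_nbhd_le_edgeCutOrder hAB).trans hk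
  · rw [Set.sdiff_eq, Set.inter_comm, ← hAc]
    exact hlt.1
  · rw [Set.sdiff_compl]
    exact hlt.2.trans_le (Set.ncard_le_ncard fun v hv => ⟨hv.2, subset_closedNbhd hv.1⟩)

/-- Otherwise moving `D` to the side `P` would break `W` with a smaller separator. -/
lemma BreaksMinimally.ncard_inter_separator_le [Finite V] (h : BreaksMinimally G W q k P Q)
    (hWD : Disjoint W D) : (D ∩ separator P Q).ncard ≤ (nbhd G D ∩ Q).ncard := by
  set S := separator P Q with hS
  have hsub : separator (P ∪ D) (Q \ closedNbhd G D) ⊆ (S \ D) ∪ (nbhd G D ∩ Q) := by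
    intro v
    simp only [hS, separator, closedNbhd, Set.mem_compl_iff, Set.mem_union, Set.mem_inter_iff,
      Set.mem_sdiff]
    tauto
  have hcard : (separator (P ∪ D) (Q \ closedNbhd G D)).ncard + (D ∩ S).ncard ≤
      S.ncard + (nbhd G D ∩ Q).ncard := by
    have hunion := (Set.ncard_le_ncard hsub).trans (Set.ncard_union_le _ _)
    have hsplit := Set.ncard_inter_add_ncard_sdiff_eq_ncard S D
    rw [Set.inter_comm D S]
    lia
  by_contra! hlt
  have hbreaks : Breaks G W q k (P ∪ D) (Q \ closedNbhd G D) :=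
    { anticomplete := by
        rintro x (hx | hx) y ⟨hyQ, hyD⟩
        · exact h.anticomplete x hx y hyQ
        · exact anticomplete_compl_closedNbhd x hx y hyD
      ncard_separator_le := by
        have hk := h.ncard_separator_le
        lia
      lt_ncard_sdiff_left := by
        rw [← Set.sdiff_sdiff, (hWD.mono_left Set.sdiff_subset).sdiff_eq_left]
        exact h.lt_ncard_sdiff_left
      lt_ncard_sdiff_right := h.lt_ncard_sdiff_right.trans_le
        (Set.ncard_le_ncard (Set.sdiff_subset_sdiff_right Set.sdiff_subset)) }
  have hmin := h.ncard_separator_le_of_breaks _ _ hbreaks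
  lia

end Separations

/-- A laminar family whose members have at most `k` neighbors, so that the adhesions of its tree
decomposition have at most `k` vertices. -/
structure IsAdmissible {V : Type} (G : SimpleGraph V) (k : ℕ) (L : Set (Set V)) : Prop
    extends IsLaminar G L where
  ncard_nbhd_le : ∀ X ∈ L, (nbhd G X).ncard ≤ k

/-- The contribution to the potential of a bag with `n` vertices. Bags with at most `k` vertices
are free, and a larger bag outweighs any two smaller ones together. -/
def weight (k n : ℕ) : ℕ := if n ≤ k then 0 else 3 ^ n

/-- The quantity minimized by the family in the main theorem: the total weight of the bags. -/
noncomputable def potential {V : Type} [Finite V] (G : SimpleGraph V) (k : ℕ) (L : Set (Set V)) :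
    ℕ :=
  ∑ X ∈ L.toFinite.toFinset, weight k (bag G L X).ncard

section Weights

variable {k a b n : ℕ}

lemma weight_of_le (h : n ≤ k) : weight k n = 0 := if_pos h

lemma weight_le_pow : weight k n ≤ 3 ^ n := by
  unfold weight
  split_ifs
  exacts [Nat.zero_le _, le_rfl]

lemma weight_mono : Monotone (weight k) := by
  intro a b hab
  unfold weight
  split_ifs
  · exact le_rfl
  · exact Nat.zero_le _
  · lia
  · exact Nat.pow_le_pow_right three_pos hab

lemma weight_add_weight_lt (ha : a < n) (hb : b < n) (hn : k < n) :
    weight k a + weight k b < weight k n := by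
  obtain ⟨m, rfl⟩ := Nat.exists_eq_add_one_of_ne_zero (Nat.ne_zero_of_lt ha)
  have hw : ∀ c < m + 1, weight k c ≤ 3 ^ m := fun c hc =>
    weight_le_pow.trans (Nat.pow_le_pow_right three_pos (Nat.le_of_lt_succ hc))
  calc weight k a + weight k b ≤ 3 ^ m + 3 ^ m := add_le_add (hw a ha) (hw b hb)
    _ < 3 ^ (m + 1) := by
      have hpos := Nat.pow_pos (n := m) three_pos
      lia
    _ = weight k (m + 1) := (if_neg hn.not_ge).symm

lemma weight_add_weight_le (ha : a ≤ n) (hb : b ≤ n) (hab : a = n → b ≤ k) (hba : b = n → a ≤ k) :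
    weight k a + weight k b ≤ weight k n := by
  rcases le_or_gt n k with hn | hn
  · rw [weight_of_le (ha.trans hn), weight_of_le (hb.trans hn)]
    exact Nat.zero_le _
  rcases ha.eq_or_lt with rfl | ha
  · rw [weight_of_le (hab rfl), add_zero]
  rcases hb.eq_or_lt with rfl | hb
  · rw [weight_of_le (hba rfl), zero_add]
  · exact (weight_add_weight_lt ha hb hn).le

lemma sum_le_sum_of_exists_fiber {α β : Type*} {s : Finset α} {t : Finset β}
    {f : α → ℕ} {g : β → ℕ} (φ : β → α) (h : ∀ x ∈ s, f x ≠ 0 → ∃ y ∈ t, φ y = x ∧ f x ≤ g y) :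
    ∑ x ∈ s, f x ≤ ∑ y ∈ t, g y := by
  classical
  have hfiber : ∀ x ∈ s, f x ≤ ∑ y ∈ t with φ y = x, g y := fun x hx => by
    rcases eq_or_ne (f x) 0 with h₀ | h₀
    · exact h₀ ▸ Nat.zero_le _
    · obtain ⟨y, hy, hyx, hfg⟩ := h x hx h₀
      exact hfg.trans (Finset.single_le_sum_of_canonicallyOrdered (Finset.mem_filter.2 ⟨hy, hyx⟩))
  exact (Finset.sum_le_sum hfiber).trans
    (Finset.sum_fiberwise_le_sum_of_sum_fiber_nonneg fun _ _ => Nat.zero_le _)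

end Weights

section Reroot

variable {V : Type} {G : SimpleGraph V} {k : ℕ} {L : Set (Set V)} {C X Y : Set V} {v : V}

open Classical in
/-- The effect on the member `Y` of a laminar family of moving the root of its tree to the node
of `C`: on the path from `C` to the root, the edges change direction. -/
noncomputable def rerootMap (G : SimpleGraph V) (L : Set (Set V)) (C Y : Set V) : Set V :=
  if C ⊆ Y then (closedNbhd G (childTowards L C Y))ᶜ else Y

/-- The laminar family `L` with the root of its tree moved to the node of `C`. -/
def reroot (G : SimpleGraph V) (L : Set (Set V)) (C : Set V) : Set (Set V) :=
  rerootMap G L C '' L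

lemma rerootMap_of_subset (h : C ⊆ Y) :
    rerootMap G L C Y = (closedNbhd G (childTowards L C Y))ᶜ := if_pos h

lemma rerootMap_of_not_subset (h : ¬ C ⊆ Y) : rerootMap G L C Y = Y := if_neg h

lemma rerootMap_self : rerootMap G L C C = Set.univ := by
  rw [rerootMap_of_subset subset_rfl, childTowards_self, closedNbhd_empty, Set.compl_empty]

lemma mem_reroot_of_not_subset (hY : Y ∈ L) (h : ¬ C ⊆ Y) : Y ∈ reroot G L C :=
  ⟨Y, hY, rerootMap_of_not_subset h⟩

lemma bag_reroot_subset_of_not_subset (hCX : ¬ C ⊆ X) :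
    bag G (reroot G L C) X ⊆ bag G L X := fun _ hv =>
  mem_bag.2 ⟨(mem_bag.1 hv).1, fun Y hY hYX => (mem_bag.1 hv).2 Y
    (mem_reroot_of_not_subset hY fun hCY => hCX (hCY.trans hYX.1)) hYX⟩

namespace IsLaminar

lemma nested_rerootMap (hL : IsLaminar G L) (hX : X ∈ L) (hCX : ¬ C ⊆ X) (hCY : C ⊆ Y) :
    Nested G (rerootMap G L C X) (rerootMap G L C Y) := by
  rw [rerootMap_of_not_subset hCX, rerootMap_of_subset hCY]
  rcases hL.subset_childTowards_or_anticomplete (Y := Y) hX hCX with h | h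
  · exact .inr (.inr (anticomplete_compl_closedNbhd.mono h subset_rfl))
  · exact .inl (anticomplete_iff_subset_compl_closedNbhd.1 h.symm)

lemma bag_subset_bag_reroot_univ (hL : IsLaminar G L) (hC : C ∈ L) :
    bag G L C ⊆ bag G (reroot G L C) Set.univ := fun v hv => by
  rw [hL.mem_bag_iff hC] at hv
  refine mem_bag.2 ⟨.inl (Set.mem_univ v), ?_⟩
  rintro _ ⟨Y, hY, rfl⟩ hYu hvY
  by_cases hCY : C ⊆ Y
  · rw [rerootMap_of_subset hCY] at hvY hYu
    rcases Set.eq_empty_or_nonempty (childTowards L C Y) with h | ⟨w, D, ⟨hD, hCD, hDY⟩, -⟩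
    · exact hYu.ne (by rw [h, closedNbhd_empty, Set.compl_empty])
    · exact hvY (closedNbhd_mono (hCD.trans (subset_childTowards hD hCD hDY)) hv.1)
  · exact hCY (hv.2 Y hY (rerootMap_of_not_subset hCY ▸ hvY))

variable [Finite V]

/-- If `v ∉ N[Y]`, then `v` lies in the member of the new family coming from the parent of `Y`. -/
lemma mem_closedNbhd_of_mem_bag_reroot (hL : IsLaminar G L) (hC₀ : C.Nonempty) (hCY : C ⊆ Y)
    (hY : Maximal (fun Y => Y ∈ L ∧ rerootMap G L C Y = X) Y)
    (hv : v ∈ bag G (reroot G L C) X) : v ∈ closedNbhd G Y := by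
  by_contra hvY
  have hYu : Y ≠ Set.univ := by
    rintro rfl
    exact hvY (subset_closedNbhd (Set.mem_univ v))
  obtain ⟨hP, hYP⟩ := hL.parentSet_mem (hC₀.mono hCY) hYu
  have hmap : rerootMap G L C (parentSet L Y) = (closedNbhd G Y)ᶜ := by
    rw [rerootMap_of_subset (hCY.trans hYP.1), hL.childTowards_parentSet hC₀ hY.prop.1 hCY hYu]
  have hsub : (closedNbhd G Y)ᶜ ⊆ X := by
    rw [← hY.prop.2, rerootMap_of_subset hCY]
    exact Set.compl_subset_compl.2 (closedNbhd_mono (Set.sUnion_subset fun _ hD => hD.2.2.1))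
  have hne : (closedNbhd G Y)ᶜ ≠ X := fun h => hYP.2 (hY.le_of_ge ⟨hP, hmap.trans h⟩ hYP.1)
  exact (mem_bag.1 hv).2 _ ⟨_, hP, hmap⟩ (hsub.ssubset_of_ne hne) hvY

lemma bag_reroot_subset_of_subset (hL : IsLaminar G L) (hC₀ : C.Nonempty) (hCY : C ⊆ Y)
    (hX : X ∈ L → C ⊆ X) (hY : Maximal (fun Y => Y ∈ L ∧ rerootMap G L C Y = X) Y) :
    bag G (reroot G L C) X ⊆ bag G L Y := by
  intro v hv
  refine mem_bag.2 ⟨hL.mem_closedNbhd_of_mem_bag_reroot hC₀ hCY hY hv, fun Z hZ hZY hvZ => ?_⟩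
  have hX_eq : X = (closedNbhd G (childTowards L C Y))ᶜ :=
    hY.prop.2.symm.trans (rerootMap_of_subset hCY)
  have hvD : v ∉ childTowards L C Y := fun hvD =>
    anticomplete_iff_subset_compl_closedNbhd.1 anticomplete_compl_closedNbhd.symm hvD
      (hX_eq ▸ (mem_bag.1 hv).1)
  by_cases hCZ : C ⊆ Z
  · exact hvD (subset_childTowards hZ hCZ hZY hvZ)
  · rcases hL.subset_childTowards_or_anticomplete (Y := Y) hZ hCZ with h | h
    · exact hvD (h hvZ)
    · have hZX : Z ⊆ X := hX_eq ▸ anticomplete_iff_subset_compl_closedNbhd.1 h.symm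
      rcases hZX.eq_or_ssubset with rfl | hZX
      · exact hCZ (hX hZ)
      · exact (mem_bag.1 hv).2 Z (mem_reroot_of_not_subset hZ hCZ) hZX hvZ

lemma exists_bag_reroot_subset (hL : IsLaminar G L) (hC₀ : C.Nonempty)
    (hX : X ∈ reroot G L C) :
    ∃ Y ∈ L, rerootMap G L C Y = X ∧ bag G (reroot G L C) X ⊆ bag G L Y := by
  by_cases hXL : X ∈ L ∧ ¬ C ⊆ X
  · exact ⟨X, hXL.1, rerootMap_of_not_subset hXL.2, bag_reroot_subset_of_not_subset hXL.2⟩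
  obtain ⟨Y₀, hY₀⟩ := hX
  obtain ⟨Y, -, hY⟩ := Finite.exists_le_maximal
    (p := fun Y => Y ∈ L ∧ rerootMap G L C Y = X) hY₀
  have hCY : C ⊆ Y := by
    by_contra hCY
    have hYX : Y = X := (rerootMap_of_not_subset hCY).symm.trans hY.prop.2
    exact hXL (hYX ▸ ⟨hY.prop.1, hCY⟩)
  have hX : X ∈ L → C ⊆ X := fun h => not_not.1 fun h' => hXL ⟨h, h'⟩
  exact ⟨Y, hY.prop.1, hY.prop.2, hL.bag_reroot_subset_of_subset hC₀ hCY hX hY⟩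

lemma potential_reroot_le (hL : IsLaminar G L) (hC₀ : C.Nonempty) :
    potential G k (reroot G L C) ≤ potential G k L := by
  refine sum_le_sum_of_exists_fiber (rerootMap G L C) fun X hX _ => ?_
  obtain ⟨Y, hY, hYX, hsub⟩ := hL.exists_bag_reroot_subset hC₀ ((Set.Finite.mem_toFinset _).1 hX)
  exact ⟨Y, (Set.Finite.mem_toFinset _).2 hY, hYX, weight_mono (Set.ncard_le_ncard hsub)⟩

end IsLaminar

lemma isLaminar_reroot (hL : IsLaminar G L) (hC : C ∈ L) (hC₀ : C.Nonempty) :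
    IsLaminar G (reroot G L C) where
  univ_mem := ⟨C, hC, rerootMap_self⟩
  nested := by
    rintro _ ⟨X, hX, rfl⟩ _ ⟨Y, hY, rfl⟩
    by_cases hCX : C ⊆ X <;> by_cases hCY : C ⊆ Y
    · have hanti {Z Z'} (h : Z ⊆ Z') : (closedNbhd G (childTowards L C Z'))ᶜ ⊆
          (closedNbhd G (childTowards L C Z))ᶜ :=
        Set.compl_subset_compl.2 (closedNbhd_mono (childTowards_mono h))
      rw [rerootMap_of_subset hCX, rerootMap_of_subset hCY]
      exact ((hL.isChain_superset hC₀).total ⟨hX, hCX⟩ ⟨hY, hCY⟩).elim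
        (fun h => .inr (.inl (hanti h))) fun h => .inl (hanti h)
    · exact (hL.nested_rerootMap hY hCY hCX).symm
    · exact hL.nested_rerootMap hX hCX hCY
    · rw [rerootMap_of_not_subset hCX, rerootMap_of_not_subset hCY]
      exact hL.nested X hX Y hY

lemma isAdmissible_reroot [Finite V] (hL : IsAdmissible G k L) (hC : C ∈ L) (hC₀ : C.Nonempty) :
    IsAdmissible G k (reroot G L C) where
  toIsLaminar := isLaminar_reroot hL.toIsLaminar hC hC₀
  ncard_nbhd_le := by
    rintro _ ⟨Y, hY, rfl⟩
    by_cases hCY : C ⊆ Y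
    · rw [rerootMap_of_subset hCY]
      refine (Set.ncard_le_ncard nbhd_compl_closedNbhd_subset).trans ?_
      rcases hL.childTowards_eq_empty_or_mem hC₀ Y with h | h
      · simp only [h, nbhd_empty, Set.ncard_empty, Nat.zero_le]
      · exact hL.ncard_nbhd_le _ h
    · rw [rerootMap_of_not_subset hCY]
      exact hL.ncard_nbhd_le Y hY

end Reroot

section Split

variable {V : Type} {G : SimpleGraph V} {k : ℕ} {L L' : Set (Set V)} {P Q D X : Set V}

/-- The laminar family obtained from `L` by cutting its members along the separation with open
sides `P` and `Q`. -/
def split (L : Set (Set V)) (P Q : Set V) : Set (Set V) :=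
  insert Set.univ ((· ∩ P) '' L ∪ (· ∩ Q) '' L)

/-- An upper bound for the bag of `D ∩ P` in `split L P Q`: the part of the bag of `D` in `P`
together with all of `N[D]` in the separator. -/
def halfBag (G : SimpleGraph V) (L : Set (Set V)) (P Q D : Set V) : Set V :=
  (bag G L D ∩ P) ∪ (closedNbhd G D ∩ separator P Q)

lemma split_comm : split L P Q = split L Q P := by
  rw [split, split, Set.union_comm]

lemma inter_left_mem_split (hD : D ∈ L) : D ∩ P ∈ split L P Q := .inr (.inl ⟨D, hD, rfl⟩)

lemma isLaminar_split (hL : IsLaminar G L) (hPQ : Anticomplete G P Q) :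
    IsLaminar G (split L P Q) where
  univ_mem := .inl rfl
  nested := by
    have hcross (D E : Set V) : Nested G (D ∩ P) (E ∩ Q) :=
      .inr (.inr (hPQ.mono Set.inter_subset_right Set.inter_subset_right))
    rintro X (rfl | ⟨D, hD, rfl⟩ | ⟨D, hD, rfl⟩) Y (rfl | ⟨E, hE, rfl⟩ | ⟨E, hE, rfl⟩)
    any_goals exact nested_univ_right
    any_goals exact nested_univ_right.symm
    · exact (hL.nested D hD E hE).inter_right P
    · exact hcross D E
    · exact (hcross E D).symm
    · exact (hL.nested D hD E hE).inter_right Q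

lemma Anticomplete.closedNbhd_subset (hPQ : Anticomplete G P Q) :
    closedNbhd G P ⊆ P ∪ separator P Q := fun v hv => by
  have hvQ : v ∉ Q := fun hvQ => anticomplete_iff_subset_compl_closedNbhd.1 hPQ hvQ hv
  by_cases hvP : v ∈ P
  · exact .inl hvP
  · exact .inr fun hvPQ => hvPQ.elim hvP hvQ

lemma nbhd_inter_subset (hPQ : Anticomplete G P Q) :
    nbhd G (D ∩ P) ⊆ (nbhd G D ∩ P) ∪ (nbhd G D ∩ separator P Q) ∪ (D ∩ separator P Q) := by
  intro v hv
  have hvD : v ∈ D ∨ v ∈ nbhd G D :=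
    closedNbhd_mono Set.inter_subset_left (nbhd_subset_closedNbhd hv)
  have hvP : v ∈ P ∨ v ∈ separator P Q :=
    hPQ.closedNbhd_subset (closedNbhd_mono Set.inter_subset_right (nbhd_subset_closedNbhd hv))
  have hvDP : ¬ (v ∈ D ∧ v ∈ P) := hv.1
  simp only [Set.mem_union, Set.mem_inter_iff]
  tauto

lemma bag_inter_subset_halfBag (hPQ : Anticomplete G P Q) (hsub : ∀ E ∈ L, E ∩ P ∈ L')
    (hD : Minimal (fun D => D ∈ L ∧ D ∩ P = X) D) : bag G L' X ⊆ halfBag G L P Q D := by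
  intro v hv
  obtain ⟨-, rfl⟩ := hD.prop
  have hvN : v ∈ closedNbhd G D := closedNbhd_mono Set.inter_subset_left (mem_bag.1 hv).1
  have hvPS : v ∈ P ∪ separator P Q :=
    hPQ.closedNbhd_subset (closedNbhd_mono Set.inter_subset_right (mem_bag.1 hv).1)
  rcases hvPS with hvP | hvS
  · refine .inl ⟨mem_bag.2 ⟨hvN, fun E hE hED hvE => ?_⟩, hvP⟩
    have hne : E ∩ P ≠ D ∩ P := fun h => hED.2 (hD.le_of_le ⟨hE, h⟩ hED.1)
    exact (mem_bag.1 hv).2 _ (hsub E hE)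
      ((Set.inter_subset_inter_left P hED.1).ssubset_of_ne hne) ⟨hvE, hvP⟩
  · exact .inr ⟨hvN, hvS⟩

lemma ncard_halfBag_le : (halfBag G L P Q D).ncard ≤
    (bag G L D ∩ P).ncard + (D ∩ separator P Q).ncard + (nbhd G D ∩ separator P Q).ncard := by
  rw [halfBag, closedNbhd, Set.union_inter_distrib_right, ← Set.union_assoc]
  exact (Set.ncard_union_le _ _).trans (add_le_add_left (Set.ncard_union_le _ _) _)

variable [Finite V]

lemma exists_bag_inter_subset_halfBag (hPQ : Anticomplete G P Q) (hsub : ∀ E ∈ L, E ∩ P ∈ L')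
    (hX : X ∈ (· ∩ P) '' L) : ∃ D ∈ L, D ∩ P = X ∧ bag G L' X ⊆ halfBag G L P Q D := by
  obtain ⟨D₀, hD₀⟩ := hX
  obtain ⟨D, -, hD⟩ := Finite.exists_le_minimal (p := fun D => D ∈ L ∧ D ∩ P = X) hD₀
  exact ⟨D, hD.prop.1, hD.prop.2, bag_inter_subset_halfBag hPQ hsub hD⟩

lemma exists_bag_split_subset (hPQ : Anticomplete G P Q) (hX : X ∈ split L P Q)
    (hXu : X ≠ Set.univ) :
    ∃ D ∈ L, (D ∩ P = X ∧ bag G (split L P Q) X ⊆ halfBag G L P Q D) ∨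
      (D ∩ Q = X ∧ bag G (split L P Q) X ⊆ halfBag G L Q P D) := by
  rcases hX.resolve_left hXu with hX | hX
  · obtain ⟨D, hD, hDX⟩ := exists_bag_inter_subset_halfBag hPQ
      (fun E hE => inter_left_mem_split (Q := Q) hE) hX
    exact ⟨D, hD, .inl hDX⟩
  · obtain ⟨D, hD, hDX⟩ := exists_bag_inter_subset_halfBag hPQ.symm
      (fun E hE => inter_left_mem_split (Q := P) hE) hX
    exact ⟨D, hD, .inr (split_comm (L := L) ▸ hDX)⟩

lemma Breaks.weight_bag_split_univ {W : Set V} {q : ℕ} (h : Breaks G W q k P Q)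
    (hL : IsLaminar G L) :
    weight k (bag G (split L P Q) Set.univ).ncard = 0 := by
  have hP : P ∈ split L P Q := by
    simpa only [Set.univ_inter] using inter_left_mem_split (P := P) (Q := Q) hL.univ_mem
  have hQ : Q ∈ split L P Q := by
    rw [split_comm]
    simpa only [Set.univ_inter] using inter_left_mem_split (P := Q) (Q := P) hL.univ_mem
  have hsub : bag G (split L P Q) Set.univ ⊆ separator P Q := fun v hv hvPQ => hvPQ.elim
    (Set.disjoint_left.1 (disjoint_bag_univ hP h.left_ne_univ) hv)
    (Set.disjoint_left.1 (disjoint_bag_univ hQ h.symm.left_ne_univ) hv)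
  exact weight_of_le ((Set.ncard_le_ncard hsub).trans h.ncard_separator_le)

lemma Breaks.ncard_halfBag_univ_lt (h : Breaks G (bag G L Set.univ) k k P Q) :
    (halfBag G L P Q Set.univ).ncard < (bag G L Set.univ).ncard := by
  calc (halfBag G L P Q Set.univ).ncard
    _ ≤ (bag G L Set.univ ∩ P).ncard + (separator P Q).ncard :=
        (Set.ncard_union_le _ _).trans
          (add_le_add_right (Set.ncard_le_ncard Set.inter_subset_right) _)
    _ < (bag G L Set.univ ∩ P).ncard + (bag G L Set.univ \ P).ncard :=
        add_lt_add_right (h.ncard_separator_le.trans_lt h.lt_ncard_sdiff_left) _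
    _ = (bag G L Set.univ).ncard := Set.ncard_inter_add_ncard_sdiff_eq_ncard _ _

lemma Breaks.weight_halfBag_univ_add_lt (h : Breaks G (bag G L Set.univ) k k P Q) :
    weight k (halfBag G L P Q Set.univ).ncard + weight k (halfBag G L Q P Set.univ).ncard <
      weight k (bag G L Set.univ).ncard :=
  weight_add_weight_lt h.ncard_halfBag_univ_lt h.symm.ncard_halfBag_univ_lt
    (h.lt_ncard_sdiff_left.trans_le (Set.ncard_le_ncard Set.sdiff_subset))

namespace BreaksMinimally

lemma ncard_nbhd_inter_le (h : BreaksMinimally G (bag G L Set.univ) k k P Q)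
    (hL : IsAdmissible G k L) (hD : D ∈ L) :
    (nbhd G (D ∩ P)).ncard ≤ k := by
  refine (Set.ncard_le_ncard (nbhd_inter_subset h.anticomplete)).trans ?_
  rcases eq_or_ne D Set.univ with rfl | hDu
  · simpa only [nbhd_univ, Set.empty_inter, Set.empty_union, Set.univ_inter]
      using h.ncard_separator_le
  calc _ ≤ (nbhd G D ∩ P).ncard + (nbhd G D ∩ separator P Q).ncard + (D ∩ separator P Q).ncard :=
        (Set.ncard_union_le _ _).trans (add_le_add_left (Set.ncard_union_le _ _) _)
    _ ≤ (nbhd G D ∩ P).ncard + (nbhd G D ∩ separator P Q).ncard + (nbhd G D ∩ Q).ncard :=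
        add_le_add_right (h.ncard_inter_separator_le (disjoint_bag_univ hD hDu)) _
    _ = (nbhd G D).ncard := (ncard_eq_add_separator h.anticomplete.disjoint _).symm
    _ ≤ k := hL.ncard_nbhd_le D hD

lemma isAdmissible_split (h : BreaksMinimally G (bag G L Set.univ) k k P Q)
    (hL : IsAdmissible G k L) : IsAdmissible G k (split L P Q) where
  toIsLaminar := isLaminar_split hL.toIsLaminar h.anticomplete
  ncard_nbhd_le := by
    rintro X (rfl | ⟨D, hD, rfl⟩ | ⟨D, hD, rfl⟩)
    · simp only [nbhd_univ, Set.ncard_empty, Nat.zero_le]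
    · exact h.ncard_nbhd_inter_le hL hD
    · exact h.symm.ncard_nbhd_inter_le hL hD

lemma ncard_halfBag_add_le {W : Set V} {q : ℕ} (h : BreaksMinimally G W q k P Q)
    (hWD : Disjoint W D) : (halfBag G L P Q D).ncard + (bag G L D ∩ Q).ncard ≤
      (bag G L D).ncard + (nbhd G D ∩ Q).ncard := by
  have hcorner := h.ncard_inter_separator_le hWD
  have hhalf := ncard_halfBag_le (G := G) (L := L) (P := P) (Q := Q) (D := D)
  have hbag := ncard_eq_add_separator h.anticomplete.disjoint (bag G L D)
  have hle : (nbhd G D ∩ separator P Q).ncard ≤ (bag G L D ∩ separator P Q).ncard :=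
    Set.ncard_le_ncard (Set.inter_subset_inter_left _ nbhd_subset_bag)
  lia

lemma ncard_halfBag_le_ncard_bag {W : Set V} {q : ℕ} (h : BreaksMinimally G W q k P Q)
    (hWD : Disjoint W D) : (halfBag G L P Q D).ncard ≤ (bag G L D).ncard := by
  have hle : (nbhd G D ∩ Q).ncard ≤ (bag G L D ∩ Q).ncard :=
    Set.ncard_le_ncard (Set.inter_subset_inter_left _ nbhd_subset_bag)
  have hadd := h.ncard_halfBag_add_le (L := L) hWD
  lia

lemma ncard_halfBag_le_ncard_nbhd {W : Set V} {q : ℕ} (h : BreaksMinimally G W q k P Q)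
    (hWD : Disjoint W D) (heq : (halfBag G L P Q D).ncard = (bag G L D).ncard) :
    (halfBag G L Q P D).ncard ≤ (nbhd G D).ncard := by
  have hbagQ : (bag G L D ∩ Q).ncard ≤ (nbhd G D ∩ Q).ncard := by
    have hadd := h.ncard_halfBag_add_le (L := L) hWD
    lia
  calc (halfBag G L Q P D).ncard
    _ ≤ (bag G L D ∩ Q).ncard + (D ∩ separator Q P).ncard + (nbhd G D ∩ separator Q P).ncard :=
        ncard_halfBag_le
    _ ≤ (nbhd G D ∩ Q).ncard + (nbhd G D ∩ P).ncard + (nbhd G D ∩ separator Q P).ncard :=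
        add_le_add_left (add_le_add hbagQ (h.symm.ncard_inter_separator_le hWD)) _
    _ = (nbhd G D).ncard := by
        rw [ncard_eq_add_separator h.symm.anticomplete.disjoint (nbhd G D), add_right_comm]

lemma weight_halfBag_add_le (h : BreaksMinimally G (bag G L Set.univ) k k P Q)
    (hL : IsAdmissible G k L) (hD : D ∈ L) :
    weight k (halfBag G L P Q D).ncard + weight k (halfBag G L Q P D).ncard ≤
      weight k (bag G L D).ncard := by
  rcases eq_or_ne D Set.univ with rfl | hDu
  · exact h.weight_halfBag_univ_add_lt.le
  have hWD : Disjoint (bag G L Set.univ) D := disjoint_bag_univ hD hDu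
  exact weight_add_weight_le (h.ncard_halfBag_le_ncard_bag hWD)
    (h.symm.ncard_halfBag_le_ncard_bag hWD)
    (fun heq => (h.ncard_halfBag_le_ncard_nbhd hWD heq).trans (hL.ncard_nbhd_le D hD))
    fun heq => (h.symm.ncard_halfBag_le_ncard_nbhd hWD heq).trans (hL.ncard_nbhd_le D hD)

lemma potential_split_lt (h : BreaksMinimally G (bag G L Set.univ) k k P Q)
    (hL : IsAdmissible G k L) :
    potential G k (split L P Q) < potential G k L := by
  set T := L.toFinite.toFinset
  have hmem {D : Set V} : D ∈ T ↔ D ∈ L := Set.Finite.mem_toFinset _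
  calc potential G k (split L P Q)
    _ ≤ ∑ D ∈ T.disjSum T, Sum.elim (fun D => weight k (halfBag G L P Q D).ncard)
          (fun D => weight k (halfBag G L Q P D).ncard) D := by
        refine sum_le_sum_of_exists_fiber (Sum.elim (· ∩ P) (· ∩ Q)) fun X hX hX₀ => ?_
        have hXu : X ≠ Set.univ := by
          rintro rfl
          exact hX₀ (h.weight_bag_split_univ hL.toIsLaminar)
        obtain ⟨D, hD, ⟨hDX, hsub⟩ | ⟨hDX, hsub⟩⟩ :=
          exists_bag_split_subset h.anticomplete ((Set.Finite.mem_toFinset _).1 hX) hXu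
        · exact ⟨.inl D, Finset.inl_mem_disjSum.2 (hmem.2 hD), hDX,
            weight_mono (Set.ncard_le_ncard hsub)⟩
        · exact ⟨.inr D, Finset.inr_mem_disjSum.2 (hmem.2 hD), hDX,
            weight_mono (Set.ncard_le_ncard hsub)⟩
    _ = ∑ D ∈ T, (weight k (halfBag G L P Q D).ncard + weight k (halfBag G L Q P D).ncard) := by
        rw [Finset.sum_disjSum, Finset.sum_add_distrib]
        rfl
    _ < potential G k L := Finset.sum_lt_sum
        (fun D hD => h.weight_halfBag_add_le hL (hmem.1 hD))
        ⟨Set.univ, hmem.2 hL.univ_mem, h.weight_halfBag_univ_add_lt⟩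

end BreaksMinimally

end Split

section MinimalPotential

variable {V : Type} {G : SimpleGraph V} {k : ℕ} {L : Set (Set V)} {C : Set V}

lemma isAdmissible_singleton_univ : IsAdmissible G k {Set.univ} where
  univ_mem := rfl
  nested := by
    rintro X - Y rfl
    exact nested_univ_right
  ncard_nbhd_le := by
    rintro X rfl
    simp only [nbhd_univ, Set.ncard_empty, Nat.zero_le]

variable [Finite V]

lemma isAdmissible_componentFamily (hL : IsAdmissible G k L) :
    IsAdmissible G k (componentFamily G L) where
  toIsLaminar := isLaminar_componentFamily hL.toIsLaminar
  ncard_nbhd_le := by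
    rintro X (rfl | ⟨D, hD, hX⟩)
    · simp only [nbhd_univ, Set.ncard_empty, Nat.zero_le]
    · exact (Set.ncard_le_ncard hX.nbhd_subset).trans (hL.ncard_nbhd_le D hD)

variable (G k) in
lemma exists_isAdmissible_potential_le : ∃ L, IsAdmissible G k L ∧
    ∀ L', IsAdmissible G k L' → potential G k L ≤ potential G k L' :=
  Set.exists_min_image {L | IsAdmissible G k L} (potential G k) (Set.toFinite _)
    ⟨_, isAdmissible_singleton_univ⟩

lemma IsAdmissible.isUnbreakable_bag_univ (hL : IsAdmissible G k L)
    (hmin : ∀ L', IsAdmissible G k L' → potential G k L ≤ potential G k L') :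
    IsUnbreakable G (bag G L Set.univ) k k := by
  by_contra hW
  obtain ⟨P, Q, hPQ⟩ := exists_breaksMinimally hW
  exact (hPQ.potential_split_lt hL).not_ge (hmin _ (hPQ.isAdmissible_split hL))

lemma IsAdmissible.isUnbreakable_bag (hL : IsAdmissible G k L)
    (hmin : ∀ L', IsAdmissible G k L' → potential G k L ≤ potential G k L') (hC : C ∈ L) :
    IsUnbreakable G (bag G L C) k k := by
  rcases C.eq_empty_or_nonempty with rfl | hC₀
  · refine (hL.isUnbreakable_bag_univ hmin).mono ?_
    exact Set.sdiff_subset.trans (closedNbhd_empty.trans_subset (Set.empty_subset _))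
  · have hroot : IsUnbreakable G (bag G (reroot G L C) Set.univ) k k :=
      (isAdmissible_reroot hL hC hC₀).isUnbreakable_bag_univ fun L' hL' =>
        (hL.potential_reroot_le hC₀).trans (hmin L' hL')
    exact hroot.mono (hL.bag_subset_bag_reroot_univ hC)

end MinimalPotential

theorem exists_rooted_compact_edgeUnbreakable_decomposition_general
    {V : Type} [Finite V] (G : SimpleGraph V) (k : ℕ) :
    ∃ (ι : Type) (_ : Fintype ι) (root : ι) (parent : ι → ι) (β : ι → Set V),
      IsRootedTreeDecomp G root parent β ∧
      IsCompactRTD G root parent β ∧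
      (∀ t : ι, t ≠ root → (β t ∩ β (parent t)).ncard ≤ k) ∧
      (∀ t : ι, IsUnbreakable G (β t) k k) := by
  obtain ⟨L, hL, hmin⟩ := exists_isAdmissible_potential_le G k
  have hM : IsAdmissible G k (componentFamily G L) := isAdmissible_componentFamily hL
  have hconn : ∀ X ∈ componentFamily G L, X ≠ Set.univ → (G.induce X).Connected :=
    fun X => induce_connected_of_mem_componentFamily
  have hne : ∀ X ∈ componentFamily G L, X ≠ Set.univ → X.Nonempty := fun X hX hXu =>
    Set.nonempty_coe_sort.1 (hconn X hX hXu).nonempty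
  refine ⟨componentFamily G L, Fintype.ofFinite _, ⟨Set.univ, hM.univ_mem⟩,
    parentNode hM.toIsLaminar hne, fun t => bag G (componentFamily G L) t,
    isRootedTreeDecomp_of_isLaminar hM.toIsLaminar hne,
    isCompactRTD_of_isLaminar hM.toIsLaminar hne hconn, fun t ht => ?_, fun t => ?_⟩
  · rw [bag_inter_bag_parentNode hM.toIsLaminar hne fun h => ht (Subtype.ext h)]
    exact hM.ncard_nbhd_le t t.2
  · obtain ⟨D, hD, hsub⟩ := exists_bag_componentFamily_subset hL.toIsLaminar t.2
    exact (hL.isUnbreakable_bag hmin hD).mono hsub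

/-- every finite graph `G` and positive integer `k` admit a rooted
compact tree decomposition with all adhesions of size at most `k` whose every
bag is `(k,k)`-edge-unbreakable in `G`. -/
theorem exists_rooted_compact_edgeUnbreakable_decomposition
    (V : Type) [Fintype V] (G : SimpleGraph V) (k : ℕ) (hk : 0 < k) :
    ∃ (ι : Type) (_ : Fintype ι) (root : ι) (parent : ι → ι) (β : ι → Set V),
      IsRootedTreeDecomp G root parent β ∧
      IsCompactRTD G root parent β ∧
      (∀ t : ι, t ≠ root → (β t ∩ β (parent t)).ncard ≤ k) ∧
      (∀ t : ι, IsEdgeUnbreakable G (β t) k k) := by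
  obtain ⟨ι, hι, root, parent, β, htree, hcompact, hadh, hunb⟩ :=
    exists_rooted_compact_edgeUnbreakable_decomposition_general G k
  exact ⟨ι, hι, root, parent, β, htree, hcompact, hadh, fun t => (hunb t).isEdgeUnbreakable⟩
end

section
/- There exists a constant c > 0 such that the following holds. Let U be a finite set with |U| = n ≥ 2, let r ≥ 1 be an integer, and let a₁, a₂, …, a_r be integers with 0 ≤ aᵢ ≤ n for each i; set s = a₁ + a₂ + … + a_r and m = max_{i} aᵢ. Then there exists a family F of functions f : U → {1, …, r} with |F| ≤ (s+2)^{c·(s−m+1)} · (1 + ⌈log₂ n⌉)^{r−1} such that: for any pairwise disjoint sets A₁, A₂, …, A_r ⊆ U with |Aᵢ| ≤ aᵢ for each i ∈ {1,…,r}, there exists a function f ∈ F with Aᵢ ⊆ f⁻¹(i) for every i ∈ {1,…,r}. -/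
/-!
Colour each point of `U` independently, giving it colour `i` with probability `a i / s`: draw a
uniform element of `Σ i, Fin (a i)` and keep its first component. Pairwise disjoint sets `A i` with
`#(A i) ≤ a i` are all coloured correctly with probability at least `∏ i, (a i / s) ^ a i`, and
isolating the largest part `m` bounds this below by `(s + 2) ^ (-2 * (s - m))`, because
`(s / m) ^ m ≤ exp (s - m)`. There are at most `(n + 1) ^ s` tuples `A`, so by the union bound
`(s + 2) ^ (2 * (s - m)) * s * (1 + ⌈log₂ n⌉)` random colourings serve all of them. Treating all
parts at once costs one logarithmic factor, where an induction on the number of parts costs one for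
each part but the first.
-/

open Finset Function

section Density

variable {ι κ α β : Type*}

theorem dens_piFinset [Fintype ι] [DecidableEq ι] [Fintype κ] (s : ι → Finset κ) :
    (Fintype.piFinset s).dens = ∏ i, (s i).dens := by
  simp only [dens_eq_card_div_card, Fintype.card_piFinset, Fintype.card_fun, Nat.cast_prod,
    Nat.cast_pow, prod_div_distrib, prod_const, card_univ]

theorem dens_filter_not_le_exp_neg [Fintype α] [Nonempty α] {p : α → Prop} [DecidablePred p]
    {δ : ℝ} (hδ : δ ≤ ({x | p x} : Finset α).dens) :
    (({x | ¬ p x} : Finset α).dens : ℝ) ≤ Real.exp (-δ) := by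
  have hsum : (({x | p x} : Finset α).dens : ℝ) + ({x | ¬ p x} : Finset α).dens = 1 := by
    exact_mod_cast (dens_filter_add_dens_filter_not_eq_dens p).trans dens_univ
  linarith [Real.one_sub_le_exp_neg δ]

-- Union bound over `N` independent uniformly random elements of `α`.
theorem exists_card_le_forall_exists_of_le_dens [Fintype α] [Nonempty α] {R : β → α → Prop}
    [∀ b, DecidablePred (R b)] {B : Finset β} {δ : ℝ} {N : ℕ}
    (hδ : ∀ b ∈ B, δ ≤ ({x | R b x} : Finset α).dens) (hB : #B < Real.exp (δ * N)) :
    ∃ F : Finset α, #F ≤ N ∧ ∀ b ∈ B, ∃ x ∈ F, R b x := by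
  classical
  let missing (b : β) : Finset (Fin N → α) := Fintype.piFinset fun _ ↦ {x | ¬ R b x}
  have dens_missing_le : ∀ b ∈ B, ((missing b).dens : ℝ) ≤ Real.exp (-(δ * N)) := fun b hb ↦
    calc ((missing b).dens : ℝ) = (({x | ¬ R b x} : Finset α).dens : ℝ) ^ N := by
          simp [missing, dens_piFinset]
      _ ≤ Real.exp (-δ) ^ N := by gcongr; exact dens_filter_not_le_exp_neg (hδ b hb)
      _ = Real.exp (-(δ * N)) := by rw [← Real.exp_nat_mul]; ring_nf
  have dens_biUnion_lt : ((B.biUnion missing).dens : ℝ) < 1 :=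
    calc ((B.biUnion missing).dens : ℝ) ≤ ∑ b ∈ B, ((missing b).dens : ℝ) := by
          exact_mod_cast dens_biUnion_le
      _ ≤ #B * Real.exp (-(δ * N)) := by
          simpa using sum_le_card_nsmul B _ _ dens_missing_le
      _ < Real.exp (δ * N) * Real.exp (-(δ * N)) := by gcongr
      _ = 1 := by rw [← Real.exp_add, add_neg_cancel, Real.exp_zero]
  obtain ⟨g, hg⟩ : ∃ g, g ∉ B.biUnion missing := by
    by_contra! h
    rw [eq_univ_of_forall h] at dens_biUnion_lt
    simp at dens_biUnion_lt
  refine ⟨univ.image g, card_image_le.trans (by simp), fun b hb ↦ ?_⟩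
  simpa [missing] using fun h ↦ hg (mem_biUnion.mpr ⟨b, hb, h⟩)

end Density

section Counting

variable {ι U : Type*} [Fintype ι] [Fintype U] [DecidableEq ι]

theorem card_filter_card_le_le_pow (k : ℕ) :
    #{s : Finset U | #s ≤ k} ≤ (Fintype.card U + 1) ^ k := by
  classical
  calc #{s : Finset U | #s ≤ k}
      ≤ #((range (k + 1)).biUnion fun j ↦ powersetCard j (univ : Finset U)) :=
        card_le_card fun s hs ↦ by simpa [Nat.lt_succ_iff] using hs
    _ ≤ ∑ j ∈ range (k + 1), (Fintype.card U).choose j :=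
        card_biUnion_le.trans_eq (by simp only [card_powersetCard, card_univ])
    _ ≤ ∑ j ∈ range (k + 1), Fintype.card U ^ j * k.choose j := by
        refine sum_le_sum fun j hj ↦ (Nat.choose_le_pow _ _).trans ?_
        exact Nat.le_mul_of_pos_right _ (Nat.choose_pos (Nat.lt_succ_iff.mp (mem_range.mp hj)))
    _ = (Fintype.card U + 1) ^ k := by simp [add_pow]

theorem card_piFinset_card_le_le_pow_sum (a : ι → ℕ) :
    #(Fintype.piFinset fun i ↦ ({s | #s ≤ a i} : Finset (Finset U))) ≤
      (Fintype.card U + 1) ^ ∑ i, a i := by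
  rw [Fintype.card_piFinset, ← prod_pow_eq_pow_sum]
  exact prod_le_prod' fun i _ ↦ card_filter_card_le_le_pow (a i)

theorem add_one_lt_exp_one_add_clog (n : ℕ) : (n : ℝ) + 1 < Real.exp (1 + Nat.clog 2 n : ℕ) := by
  have h : n + 1 ≤ 2 ^ (1 + Nat.clog 2 n) := by
    have := Nat.le_pow_clog one_lt_two n
    have := Nat.one_le_two_pow (n := Nat.clog 2 n)
    rw [pow_add]
    omega
  calc (n : ℝ) + 1 ≤ 2 ^ (1 + Nat.clog 2 n) := by exact_mod_cast h
    _ < Real.exp 1 ^ (1 + Nat.clog 2 n) := by gcongr; exact Real.exp_one_gt_two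
    _ = Real.exp (1 + Nat.clog 2 n : ℕ) := by rw [← Real.exp_nat_mul, mul_one]

theorem card_piFinset_card_le_lt_exp {a : ι → ℕ} (ha : ∑ i, a i ≠ 0) :
    (#(Fintype.piFinset fun i ↦ ({s | #s ≤ a i} : Finset (Finset U))) : ℝ) <
      Real.exp ((∑ i, a i) * (1 + Nat.clog 2 (Fintype.card U)) : ℕ) :=
  calc (#(Fintype.piFinset fun i ↦ ({s | #s ≤ a i} : Finset (Finset U))) : ℝ)
      ≤ ((Fintype.card U : ℝ) + 1) ^ ∑ i, a i := by
        exact_mod_cast card_piFinset_card_le_le_pow_sum a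
    _ < Real.exp (1 + Nat.clog 2 (Fintype.card U) : ℕ) ^ ∑ i, a i :=
        pow_lt_pow_left₀ (add_one_lt_exp_one_add_clog _) (by positivity) ha
    _ = Real.exp ((∑ i, a i) * (1 + Nat.clog 2 (Fintype.card U)) : ℕ) := by
        rw [← Real.exp_nat_mul, Nat.cast_mul]

end Counting

section SuccessProbability

variable {ι κ U : Type*} [Fintype ι]

theorem add_pow_le_pow_mul_exp (m d : ℕ) : ((m : ℝ) + d) ^ m ≤ m ^ m * Real.exp d := by
  rcases m.eq_zero_or_pos with rfl | hm
  · simp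
  · calc ((m : ℝ) + d) ^ m = m ^ m * (d / m + 1) ^ m := by
          rw [← mul_pow]; congr 1; field_simp; ring
      _ ≤ m ^ m * Real.exp (d / m) ^ m := by gcongr; exact Real.add_one_le_exp _
      _ = m ^ m * Real.exp d := by rw [← Real.exp_nat_mul]; congr 2; field_simp

theorem sum_pow_sum_le_pow_mul_prod_pow_self (a : ι → ℕ) (j : ι) :
    (∑ i, a i) ^ ∑ i, a i ≤ (∑ i, a i + 2) ^ (2 * (∑ i, a i - a j)) * ∏ i, a i ^ a i := by
  set s := ∑ i, a i
  obtain ⟨d, hd⟩ : ∃ d, s = a j + d :=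
    Nat.exists_eq_add_of_le (single_le_sum_of_canonicallyOrdered (mem_univ j))
  have pow_largest_le : s ^ a j ≤ a j ^ a j * (s + 2) ^ d := by
    have exp_le : Real.exp d ≤ ((s : ℝ) + 2) ^ d := by
      rcases d.eq_zero_or_pos with rfl | hpos
      · simp
      · have : (1 : ℝ) ≤ s := by exact_mod_cast (by omega : 1 ≤ s)
        rw [← mul_one (d : ℝ), Real.exp_nat_mul]
        gcongr
        linarith [Real.exp_one_lt_three]
    have h := (add_pow_le_pow_mul_exp (a j) d).trans
      (mul_le_mul_of_nonneg_left exp_le (by positivity))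
    rw [← Nat.cast_add, ← hd] at h
    exact_mod_cast h
  have pow_self_le : a j ^ a j ≤ ∏ i, a i ^ a i :=
    single_le_prod' (f := fun i ↦ a i ^ a i) (fun i _ ↦ Nat.pow_self_pos) (mem_univ j)
  calc s ^ s = s ^ a j * s ^ d := by rw [← pow_add, ← hd]
    _ ≤ (∏ i, a i ^ a i) * (s + 2) ^ d * (s + 2) ^ d := by
        gcongr
        · exact pow_largest_le.trans (Nat.mul_le_mul_right _ pow_self_le)
        · omega
    _ = (s + 2) ^ (2 * (s - a j)) * ∏ i, a i ^ a i := by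
        rw [show s - a j = d by omega]; ring

theorem inv_le_prod_div_sum_pow_self {a : ι → ℕ} (ha : ∑ i, a i ≠ 0) (j : ι) :
    (((∑ i, a i + 2) ^ (2 * (∑ i, a i - a j)) : ℕ) : ℝ)⁻¹ ≤
      ∏ i, ((a i : ℝ) / (∑ i, a i : ℕ)) ^ a i := by
  have : 0 < ∑ i, a i := Nat.pos_of_ne_zero ha
  simp only [div_pow, prod_div_distrib, prod_pow_eq_pow_sum]
  rw [inv_le_iff_one_le_mul₀' (by positivity), mul_div_assoc', one_le_div (by positivity)]
  exact_mod_cast sum_pow_sum_le_pow_mul_prod_pow_self a j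

variable [DecidableEq ι] [Fintype U] [Fintype κ]

theorem dens_filter_forall_mem_eq_prod [DecidableEq U] [Nonempty κ] (p : κ → ι)
    {A : ι → Finset U} (hA : Pairwise (Disjoint on A)) :
    ({g | ∀ i, ∀ x ∈ A i, p (g x) = i} : Finset (U → κ)).dens =
      ∏ i, ({c | p c = i} : Finset κ).dens ^ #(A i) := by
  have dens_at (x : U) : ({c | ∀ i, x ∈ A i → p c = i} : Finset κ).dens =
      ∏ i, if x ∈ A i then ({c | p c = i} : Finset κ).dens else 1 := by
    by_cases hx : ∃ i, x ∈ A i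
    · obtain ⟨i, hi⟩ := hx
      have mem_iff (k : ι) : x ∈ A k ↔ i = k :=
        ⟨fun hk ↦ by_contra fun hne ↦ disjoint_left.mp (hA hne) hi hk, fun h ↦ h ▸ hi⟩
      simp [mem_iff]
    · push Not at hx
      simp [hx]
  have filter_eq : ({g | ∀ i, ∀ x ∈ A i, p (g x) = i} : Finset (U → κ)) =
      Fintype.piFinset fun x ↦ {c | ∀ i, x ∈ A i → p c = i} := by
    ext g
    simpa using forall_comm
  simp only [filter_eq, dens_piFinset, dens_at]
  rw [prod_comm]
  simp

theorem dens_sigma_fst_eq (a : ι → ℕ) (i : ι) :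
    (({c | c.1 = i} : Finset (Σ i, Fin (a i))).dens : ℝ) = a i / (∑ i, a i : ℕ) := by
  have hcard : #{c : Σ i, Fin (a i) | c.1 = i} = a i := by
    rw [← Fintype.card_subtype, Fintype.card_congr (Equiv.sigmaSubtype i), Fintype.card_fin]
  rw [nnratCast_dens, hcard, Fintype.card_sigma]
  simp only [Fintype.card_fin]

theorem inv_le_dens_filter_forall_mem_fst_eq [DecidableEq U] {a : ι → ℕ} (ha : ∑ i, a i ≠ 0)
    (j : ι) {A : ι → Finset U} (hdisj : Pairwise (Disjoint on A)) (hcard : ∀ i, #(A i) ≤ a i) :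
    (((∑ i, a i + 2) ^ (2 * (∑ i, a i - a j)) : ℕ) : ℝ)⁻¹ ≤
      ({g | ∀ i, ∀ x ∈ A i, (g x).1 = i} : Finset (U → Σ i, Fin (a i))).dens := by
  have : Nonempty (Σ i, Fin (a i)) := by
    simpa [← Fintype.card_pos_iff, Nat.pos_iff_ne_zero] using ha
  rw [dens_filter_forall_mem_eq_prod Sigma.fst hdisj, NNRat.cast_prod]
  refine (inv_le_prod_div_sum_pow_self ha j).trans
    (prod_le_prod (fun i _ ↦ by positivity) fun i _ ↦ ?_)
  rw [NNRat.cast_pow, dens_sigma_fst_eq]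
  refine pow_le_pow_of_le_one (by positivity) (div_le_one_of_le₀ ?_ (by positivity)) (hcard i)
  exact_mod_cast single_le_sum_of_canonicallyOrdered (f := a) (mem_univ i)

end SuccessProbability

section SplitterFamily

variable {ι U : Type*}

/-- `F` is a multiway splitter family for the part-size bounds `a`: every tuple of pairwise disjoint
finite sets `A i` with at most `a i` elements is coloured correctly, each `A i` by `i`, by some
member of `F`. -/
def IsSplitterFamily (a : ι → ℕ) (F : Finset (U → ι)) : Prop :=
  ∀ A : ι → Finset U, Pairwise (Disjoint on A) → (∀ i, #(A i) ≤ a i) →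
    ∃ f ∈ F, ∀ i, ∀ x ∈ A i, f x = i

theorem IsSplitterFamily.exists_subset_preimage [Finite U] {a : ι → ℕ} {F : Finset (U → ι)}
    (hF : IsSplitterFamily a F) {A : ι → Set U} (hdisj : Pairwise (Disjoint on A))
    (hcard : ∀ i, (A i).ncard ≤ a i) : ∃ f ∈ F, ∀ i, A i ⊆ f ⁻¹' {i} := by
  have := Fintype.ofFinite U
  classical
  simpa [Set.subset_def] using hF (fun i ↦ (A i).toFinset)
    (fun i j hij ↦ Set.disjoint_toFinset.mpr (hdisj hij))
    fun i ↦ (Set.ncard_eq_toFinset_card' (A i)).symm.trans_le (hcard i)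

theorem isSplitterFamily_singleton_const {a : ι → ℕ} {j : ι} (ha : ∀ i ≠ j, a i = 0) :
    IsSplitterFamily a {fun _ : U ↦ j} := by
  refine fun A _ hcard ↦ ⟨_, mem_singleton_self _, fun i x hx ↦ ?_⟩
  by_contra hij
  have : A i = ∅ := by simpa [ha i (Ne.symm hij)] using hcard i
  simp [this] at hx

variable [Fintype ι] [Fintype U]

theorem exists_isSplitterFamily_card_le_pow_mul {a : ι → ℕ} (ha : ∑ i, a i ≠ 0) (j : ι) :
    ∃ F : Finset (U → ι), IsSplitterFamily a F ∧
      #F ≤ (∑ i, a i + 2) ^ (2 * (∑ i, a i - a j)) *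
        ((∑ i, a i) * (1 + Nat.clog 2 (Fintype.card U))) := by
  classical
  set Q := (∑ i, a i + 2) ^ (2 * (∑ i, a i - a j))
  set k := (∑ i, a i) * (1 + Nat.clog 2 (Fintype.card U))
  have : Nonempty (Σ i, Fin (a i)) := by
    simpa [← Fintype.card_pos_iff, Nat.pos_iff_ne_zero] using ha
  let B : Finset (ι → Finset U) :=
    {A ∈ Fintype.piFinset fun i ↦ {s | #s ≤ a i} | Pairwise (Disjoint on A)}
  have hB : (#B : ℝ) < Real.exp ((Q : ℝ)⁻¹ * (Q * k : ℕ)) := by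
    rw [Nat.cast_mul, inv_mul_cancel_left₀ (by positivity)]
    exact (Nat.cast_le.mpr (card_filter_le _ _)).trans_lt (card_piFinset_card_le_lt_exp ha)
  have mem_B {A : ι → Finset U} : A ∈ B ↔ (∀ i, #(A i) ≤ a i) ∧ Pairwise (Disjoint on A) := by
    simp [B]
  obtain ⟨F, hFcard, hF⟩ := exists_card_le_forall_exists_of_le_dens
    (R := fun (A : ι → Finset U) (g : U → Σ i, Fin (a i)) ↦ ∀ i, ∀ x ∈ A i, (g x).1 = i)
    (fun A hA ↦ inv_le_dens_filter_forall_mem_fst_eq ha j (mem_B.mp hA).2 (mem_B.mp hA).1) hB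
  refine ⟨F.image fun g x ↦ (g x).1, fun A hdisj hcard ↦ ?_, card_image_le.trans hFcard⟩
  obtain ⟨g, hg, hgA⟩ := hF A (mem_B.mpr ⟨hcard, hdisj⟩)
  exact ⟨_, mem_image_of_mem _ hg, hgA⟩

theorem exists_multiway_splitter_family_general [Nonempty ι] (a : ι → ℕ) :
    ∃ F : Finset (U → ι), IsSplitterFamily a F ∧
      #F ≤ (∑ i, a i + 2) ^ (2 * (∑ i, a i - univ.sup a) + 1) *
        (1 + Nat.clog 2 (Fintype.card U)) ^ min 1 (Fintype.card ι - 1) := by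
  classical
  obtain ⟨j, -, hj⟩ := exists_mem_eq_sup univ univ_nonempty a
  rw [hj]
  by_cases hzero : ∀ i ≠ j, a i = 0
  · refine ⟨_, isSplitterFamily_singleton_const hzero, ?_⟩
    rw [card_singleton]
    exact Nat.one_le_iff_ne_zero.mpr (by positivity)
  · push Not at hzero
    obtain ⟨i, hij, hi⟩ := hzero
    have hsum : ∑ i, a i ≠ 0 := fun h ↦ hi (sum_eq_zero_iff.mp h i (mem_univ i))
    have hmin : min 1 (Fintype.card ι - 1) = 1 := by
      have := Fintype.one_lt_card_iff.mpr ⟨i, j, hij⟩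
      omega
    obtain ⟨F, hF, hcard⟩ := exists_isSplitterFamily_card_le_pow_mul (U := U) hsum j
    refine ⟨F, hF, hcard.trans ?_⟩
    rw [hmin, pow_one, pow_succ, mul_assoc]
    gcongr
    omega

end SplitterFamily

/-- the multi-part generalization of the splitter/color-coding lemma
(existential form). There is a constant `c > 0` such that for every finite set `U`
with `|U| = n ≥ 2`, every `r ≥ 1`, and part-size bounds `a₁,…,a_r ≤ n` with sum `s`
and maximum `m`, there is a family `F` of functions `U → {1,…,r}` (modelled as
`U → Fin r`) of size at most `(s+2)^(c·(s−m+1)) · (1+⌈log₂ n⌉)^(r−1)` such that for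
all pairwise disjoint sets `A₁,…,A_r ⊆ U` with `|Aᵢ| ≤ aᵢ` there is an `f ∈ F`
with `Aᵢ ⊆ f⁻¹(i)` for every `i`. -/
theorem exists_multiway_splitter_family :
    ∃ c : ℕ, 0 < c ∧
      ∀ (U : Type) [Fintype U], ∀ (r : ℕ), 1 ≤ r →
        ∀ a : Fin r → ℕ,
        2 ≤ Fintype.card U → (∀ i : Fin r, a i ≤ Fintype.card U) →
        ∃ F : Finset (U → Fin r),
          F.card ≤ (∑ i, a i + 2) ^ (c * (∑ i, a i - Finset.univ.sup a + 1)) *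
              (1 + Nat.clog 2 (Fintype.card U)) ^ (r - 1) ∧
          ∀ A : Fin r → Set U, (Pairwise fun i j => Disjoint (A i) (A j)) →
            (∀ i : Fin r, (A i).ncard ≤ a i) →
            ∃ f ∈ F, ∀ i : Fin r, A i ⊆ f ⁻¹' {i} := by
  refine ⟨2, two_pos, fun U _ r hr a _ _ ↦ ?_⟩
  have : NeZero r := ⟨by omega⟩
  obtain ⟨F, hF, hcard⟩ := exists_multiway_splitter_family_general (U := U) a
  refine ⟨F, hcard.trans ?_, fun A hdisj hA ↦ hF.exists_subset_preimage hdisj hA⟩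
  rw [Fintype.card_fin]
  gcongr <;> omega
end
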